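/- Let e be a Lie derivation of L of type ε₀^∨ and let f be a Lie derivation of type ε₀, and set h := ⁅e, f⁆ in the Lie algebra of Lie derivations of L. Then h(𝖺) = 𝖺 and h(𝖻) = −𝖻, and the sl₂-relations ⁅h, e⁆ = −2 • e and ⁅h, f⁆ = 2 • f hold; in particular e, f, h span a Lie subalgebra isomorphic to sl₂. -/

import Mathlib

open scoped BigOperators

noncomputable section

/-- The free Lie algebra over ℚ on two generators. -/
abbrev L2 : Type := FreeLieAlgebra ℚ (Fin 2)

/-- The first generator 𝖺 of the free Lie algebra. -/
def ga : L2 := FreeLieAlgebra.of ℚ 0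

/-- The second generator 𝖻 of the free Lie algebra. -/
def gb : L2 := FreeLieAlgebra.of ℚ 1

/-- The adjoint action `ad x : y ↦ ⁅x, y⁆` on the free Lie algebra. -/
def adL (x : L2) : Module.End ℚ L2 := LieAlgebra.ad ℚ L2 x

/-- A Lie derivation `D` of `L2` is of type `ε^∨_{2n+2}` if
`D 𝖺 = ad(𝖺)^{2n+2} 𝖻` and
`D 𝖻 = (1/2) ∑_{i+j=2n+1} (-1)^i ⁅ad(𝖺)^i 𝖻, ad(𝖺)^j 𝖻⁆`. -/
def IsEpsDual (n : ℕ) (D : LieDerivation ℚ L2 L2) : Prop :=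
  D ga = (adL ga ^ (2 * n + 2)) gb ∧
  D gb = (1 / 2 : ℚ) • ∑ i ∈ Finset.range (2 * n + 2),
    ((-1 : ℚ)) ^ i • ⁅(adL ga ^ i) gb, (adL ga ^ (2 * n + 1 - i)) gb⁆

/-- A Lie derivation `D` of `L2` is of type `ε_{2n+2}` (the conjugate of `ε^∨_{2n+2}` by
the automorphism `𝖺 ↦ 𝖻, 𝖻 ↦ -𝖺`). -/
def IsEps (n : ℕ) (D : LieDerivation ℚ L2 L2) : Prop :=
  D ga = -((1 / 2 : ℚ) • ∑ i ∈ Finset.range (2 * n + 2),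
    ((-1 : ℚ)) ^ i • ⁅(adL gb ^ i) ga, (adL gb ^ (2 * n + 1 - i)) ga⁆) ∧
  D gb = -((adL gb ^ (2 * n + 2)) ga)

/-- A Lie derivation is of type `ε₀^∨` if it sends `𝖺 ↦ 𝖻` and `𝖻 ↦ 0`. -/
def IsEpsZeroDual (D : LieDerivation ℚ L2 L2) : Prop :=
  D ga = gb ∧ D gb = 0

/-- A Lie derivation is of type `ε₀` if it sends `𝖺 ↦ 0` and `𝖻 ↦ -𝖺`. -/
def IsEpsZero (D : LieDerivation ℚ L2 L2) : Prop :=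
  D ga = 0 ∧ D gb = -ga


/-- The two generators generate the free Lie algebra. -/
theorem lieSpan_gens_eq_top : LieSubalgebra.lieSpan ℚ L2 ({ga, gb} : Set L2) = ⊤ := by
  set S := LieSubalgebra.lieSpan ℚ L2 ({ga, gb} : Set L2) with hS
  have hmem : ∀ i : Fin 2, FreeLieAlgebra.of ℚ i ∈ S := by
    intro i
    apply LieSubalgebra.subset_lieSpan
    fin_cases i
    · exact Or.inl rfl
    · exact Or.inr rfl
  let F : L2 →ₗ⁅ℚ⁆ S := FreeLieAlgebra.lift ℚ (fun i => (⟨FreeLieAlgebra.of ℚ i, hmem i⟩ : S))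
  have hF : S.incl.comp F = LieHom.id := by
    apply FreeLieAlgebra.hom_ext
    intro i
    simp [F]
  rw [eq_top_iff]
  intro x _
  have hx : ((F x : S) : L2) = x := LieHom.congr_fun hF x
  rw [← hx]
  exact (F x).2

/-- Derivations agreeing on both generators are equal. -/
theorem derivation_ext_gens {D E : LieDerivation ℚ L2 L2}
    (ha : D ga = E ga) (hb : D gb = E gb) : D = E := by
  apply LieDerivation.ext_of_lieSpan_eq_top _ lieSpan_gens_eq_top
  rintro x (rfl | rfl)
  · exact ha
  · exact hb

theorem sl2_triple_of_derivations
    (e f : LieDerivation ℚ L2 L2)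
    (he : IsEpsZeroDual e) (hf : IsEpsZero f) :
    ⁅e, f⁆ ga = ga ∧ ⁅e, f⁆ gb = -gb ∧
    ⁅(⁅e, f⁆ : LieDerivation ℚ L2 L2), e⁆ = (-2 : ℚ) • e ∧
    ⁅(⁅e, f⁆ : LieDerivation ℚ L2 L2), f⁆ = (2 : ℚ) • f := by
  obtain ⟨ea, eb⟩ := he
  obtain ⟨fa, fb⟩ := hf
  have hha : ⁅e, f⁆ ga = ga := by
    rw [LieDerivation.commutator_apply, fa, ea, fb, map_zero]; abel
  have hhb : ⁅e, f⁆ gb = -gb := by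
    rw [LieDerivation.commutator_apply, fb, eb, map_neg, map_zero, ea]; abel
  refine ⟨hha, hhb, ?_, ?_⟩
  · apply derivation_ext_gens
    · rw [LieDerivation.commutator_apply, LieDerivation.smul_apply, hha, ea, hhb]; module
    · rw [LieDerivation.commutator_apply, LieDerivation.smul_apply, hhb, eb, map_zero, map_neg, eb]
      module
  · apply derivation_ext_gens
    · rw [LieDerivation.commutator_apply, LieDerivation.smul_apply, hha, fa, map_zero]; module
    · rw [LieDerivation.commutator_apply, LieDerivation.smul_apply, hhb, fb, map_neg, map_neg,
        hha, fb]
      module
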